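/- For every odd integer k ≥ 9, there exists a k-ARCS(2k+1), i.e. an almost resolvable k-cycle system of order 2k+1. -/

import Mathlib

open SimpleGraph

/-- `F` is a `C_k`-factor of `H`: a spanning subgraph of `H` that is 2-regular
and each of whose connected components has exactly `k` vertices. -/
def IsCycleFactor {V : Type*} (H F : SimpleGraph V) (k : ℕ) : Prop :=
  F ≤ H ∧ (∀ v, (F.neighborSet v).ncard = 2) ∧
    ∀ v : V, {w | F.Reachable v w}.ncard = k

/-- The family of graphs `F` partitions the edge set of `H`. -/
def IsDecomp {V ι : Type*} (H : SimpleGraph V) (F : ι → SimpleGraph V) : Prop :=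
  (Pairwise fun i j => Disjoint (F i).edgeSet (F j).edgeSet) ∧
  ∀ e, e ∈ H.edgeSet ↔ ∃ i, e ∈ (F i).edgeSet

/-- `HW H m n α β`: the edge set of `H` can be partitioned into
`α` `C_m`-factors and `β` `C_n`-factors. -/
def HW {V : Type*} (H : SimpleGraph V) (m n α β : ℕ) : Prop :=
  ∃ F : Fin α ⊕ Fin β → SimpleGraph V,
    (∀ i, IsCycleFactor H (F (Sum.inl i)) m) ∧
    (∀ j, IsCycleFactor H (F (Sum.inr j)) n) ∧
    IsDecomp H F

/-- `(α, β) ∈ HWP(v; m, n)` for odd `v`: `K_v` has a 2-factorization into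
`α` `C_m`-factors and `β` `C_n`-factors. -/
def HWPodd (v m n α β : ℕ) : Prop := HW (⊤ : SimpleGraph (Fin v)) m n α β

/-- `F ≤ H` is a vertex-disjoint union of `c` cycles of length `k`:
2-regular on its support, every component has `k` vertices, and the support
has `k * c` vertices. -/
def IsCycleClass {V : Type*} (H F : SimpleGraph V) (k c : ℕ) : Prop :=
  F ≤ H ∧ (∀ v ∈ F.support, (F.neighborSet v).ncard = 2) ∧
  (∀ v ∈ F.support, {w | F.Reachable v w}.ncard = k) ∧
  F.support.ncard = k * c

/-- An almost resolvable `k`-cycle system of order `v`: a partition of the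
edges of `K_v` into `(v-1)/2` almost parallel classes (each a vertex-disjoint
union of `(v-1)/k` `k`-cycles) together with one half-parallel class
(a vertex-disjoint union of `(v-1)/(2k)` `k`-cycles). -/
def IsARCS (k v : ℕ) : Prop :=
  ∃ F : Fin ((v - 1) / 2) ⊕ Unit → SimpleGraph (Fin v),
    (∀ i, IsCycleClass ⊤ (F (Sum.inl i)) k ((v - 1) / k)) ∧
    (∀ j, IsCycleClass ⊤ (F (Sum.inr j)) k ((v - 1) / (2 * k))) ∧
    IsDecomp (⊤ : SimpleGraph (Fin v)) F

/-- The lexicographic product `C_m[n]` of the cycle `C_m` with the empty graph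
on `n` vertices, on vertex set `ZMod m × ZMod n`. -/
def lexCycle (m n : ℕ) : SimpleGraph (ZMod m × ZMod n) :=
  SimpleGraph.fromRel (fun a b => a.1 - b.1 = 1)

/-- The Cayley graph of an additive group with connection set `S`. -/
def cayley {Γ : Type*} [AddGroup Γ] (S : Set Γ) : SimpleGraph Γ :=
  SimpleGraph.fromRel (fun a b => a - b ∈ S)

/-!
Write `k = 2 * n + 1` and take as points `∞` (encoded as `none`) and two rows indexed by `ZMod k`.
The almost parallel classes are the `k` translates of a base class made of two cycles. One runs
through `∞` and along two paths, one in each row, whose labels form graceful labellings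
`p 0, …, p (n - 1)` and `q 0, …, q (n - 1)`, with `p 0` joined to `q 0`; the other zigzags between
the remaining points of the rows and omits the point `j` of the first row.

The graceful paths give each difference `1, …, n - 1` once inside each row, and closing up the
zigzag gives the difference `n` inside the second row. The zigzag gives every difference between
the rows except `2 * j - n`, so the edge from `p 0` to `q 0` has to supply it. With `q 0 = 0` this
asks for a graceful path whose first label has the parity of `n`, and first label `0` or `1` can
always be achieved. The edges of difference `n` inside the first row, which are left over, form the
half-parallel class. Since the classes have exactly as many edges as the complete graph, it is
enough that they cover it.
-/

section CycleUnion

variable {V W ι : Type*} {k : ℕ} {f : ι × ZMod k → V}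

/-- The union of the closed walks `i ↦ f (t, i)` of length `k`, one for each `t : ι`. It is a
vertex-disjoint union of `k`-cycles when `f` is injective and `3 ≤ k`. -/
def cycleUnion (f : ι × ZMod k → V) : SimpleGraph V :=
  fromEdgeSet (Set.range fun x : ι × ZMod k => s(f x, f (x.1, x.2 + 1)))

lemma cycleUnion_adj_succ [Fact (1 < k)] (hf : Function.Injective f) (t : ι) (i : ZMod k) :
    (cycleUnion f).Adj (f (t, i)) (f (t, i + 1)) :=
  (fromEdgeSet_adj _).2 ⟨⟨(t, i), rfl⟩, hf.ne (by simp)⟩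

lemma cycleUnion_adj_iff [Fact (1 < k)] (hf : Function.Injective f) {t : ι} {i : ZMod k} {b : V} :
    (cycleUnion f).Adj (f (t, i)) b ↔ b = f (t, i + 1) ∨ b = f (t, i - 1) := by
  constructor
  · rintro ⟨⟨⟨t', i'⟩, h⟩, -⟩
    rcases Sym2.eq_iff.1 h with ⟨hi, rfl⟩ | ⟨rfl, hi⟩
    · obtain ⟨rfl, rfl⟩ := Prod.mk.inj (hf hi)
      exact Or.inl rfl
    · obtain ⟨rfl, rfl⟩ := Prod.mk.inj (hf hi)
      exact Or.inr (by rw [add_sub_cancel_right])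
  · rintro (rfl | rfl)
    · exact cycleUnion_adj_succ hf t i
    · simpa only [sub_add_cancel] using (cycleUnion_adj_succ hf t (i - 1)).symm

lemma cycleUnion_comp_adj {g : V → W} (hg : Function.Injective g) {a b : V}
    (h : (cycleUnion f).Adj a b) : (cycleUnion (g ∘ f)).Adj (g a) (g b) := by
  obtain ⟨⟨x, hx⟩, hab⟩ := (fromEdgeSet_adj _).1 h
  exact (fromEdgeSet_adj _).2 ⟨⟨x, congrArg (Sym2.map g) hx⟩, hg.ne hab⟩

lemma support_cycleUnion [Fact (1 < k)] (hf : Function.Injective f) :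
    (cycleUnion f).support = Set.range f := by
  ext w
  constructor
  · rintro ⟨b, ⟨x, h⟩, -⟩
    rcases Sym2.eq_iff.1 h with ⟨hw, -⟩ | ⟨-, hw⟩ <;> exact ⟨_, hw⟩
  · rintro ⟨⟨t, i⟩, rfl⟩
    exact ⟨_, cycleUnion_adj_succ hf t i⟩

lemma ncard_neighborSet_cycleUnion (hk : 3 ≤ k) (hf : Function.Injective f) (x : ι × ZMod k) :
    ((cycleUnion f).neighborSet (f x)).ncard = 2 := by
  obtain ⟨t, i⟩ := x
  have : Fact (1 < k) := ⟨by omega⟩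
  have hne : i + 1 ≠ i - 1 := by
    intro h
    have h2 : ((2 : ℕ) : ZMod k) = 0 := by
      push_cast
      linear_combination h
    have := Nat.le_of_dvd two_pos ((ZMod.natCast_eq_zero_iff 2 k).1 h2)
    omega
  have hnbr : (cycleUnion f).neighborSet (f (t, i)) = {f (t, i + 1), f (t, i - 1)} :=
    Set.ext fun _ => cycleUnion_adj_iff hf
  rw [hnbr, Set.ncard_pair (hf.ne fun h => hne (Prod.mk.inj h).2)]

lemma setOf_reachable_cycleUnion [Fact (1 < k)] (hf : Function.Injective f) (t : ι) (i : ZMod k) :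
    {w | (cycleUnion f).Reachable (f (t, i)) w} = Set.range fun j => f (t, j) := by
  have : NeZero k := ⟨(Fact.out : 1 < k).ne_bot⟩
  ext w
  constructor
  · intro h
    induction (reachable_iff_reflTransGen _ _).1 h with
    | refl => exact ⟨i, rfl⟩
    | tail _ hadj ih =>
      obtain ⟨j, rfl⟩ := ih ((reachable_iff_reflTransGen _ _).2 ‹_›)
      rcases (cycleUnion_adj_iff hf).1 hadj with rfl | rfl <;> exact ⟨_, rfl⟩
  · rintro ⟨j, rfl⟩
    have hstep (m : ℕ) : (cycleUnion f).Reachable (f (t, i)) (f (t, i + m)) := by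
      induction m with
      | zero => simp
      | succ m ih =>
        rw [Nat.cast_succ, ← add_assoc]
        exact ih.trans (cycleUnion_adj_succ hf t _).reachable
    simpa using hstep (j - i).val

lemma isCycleClass_cycleUnion (hk : 3 ≤ k) (hf : Function.Injective f) :
    IsCycleClass ⊤ (cycleUnion f) k (Nat.card ι) := by
  have : Fact (1 < k) := ⟨by omega⟩
  have hcomponent (t : ι) : Function.Injective fun i => f (t, i) :=
    hf.comp (Prod.mk_right_injective t)
  rw [IsCycleClass, support_cycleUnion hf]
  refine ⟨le_top, ?_, ?_, ?_⟩
  · rintro _ ⟨x, rfl⟩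
    exact ncard_neighborSet_cycleUnion hk hf x
  · rintro _ ⟨⟨t, i⟩, rfl⟩
    rw [setOf_reachable_cycleUnion hf, Set.ncard_range_of_injective (hcomponent t), Nat.card_zmod]
  · rw [Set.ncard_range_of_injective hf, Nat.card_prod, Nat.card_zmod, mul_comm]

lemma ncard_edgeSet_cycleUnion_le [Finite ι] [NeZero k] (f : ι × ZMod k → V) :
    (cycleUnion f).edgeSet.ncard ≤ Nat.card ι * k := by
  rw [cycleUnion, edgeSet_fromEdgeSet, ← Set.image_univ]
  calc _ ≤ _ := Set.ncard_le_ncard Set.sdiff_subset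
    _ ≤ _ := Set.ncard_image_le
    _ = Nat.card ι * k := by rw [Set.ncard_univ, Nat.card_prod, Nat.card_zmod]

end CycleUnion

lemma isDecomp_of_sum_ncard_edgeSet_le {V ι : Type*} [Finite V] [Fintype ι] {H : SimpleGraph V}
    {F : ι → SimpleGraph V} (hle : ∀ i, F i ≤ H)
    (hcover : ∀ e ∈ H.edgeSet, ∃ i, e ∈ (F i).edgeSet)
    (hcard : ∑ i, (F i).edgeSet.ncard ≤ H.edgeSet.ncard) : IsDecomp H F := by
  let inclusion : (Σ i, (F i).edgeSet) → H.edgeSet := fun x =>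
    ⟨x.2, edgeSet_mono (hle x.1) x.2.2⟩
  have hsurj : Function.Surjective inclusion := by
    rintro ⟨e, he⟩
    obtain ⟨i, hi⟩ := hcover e he
    exact ⟨⟨i, e, hi⟩, rfl⟩
  have hinj : Function.Injective inclusion :=
    (hsurj.bijective_of_nat_card_le (by
      simpa only [Nat.card_sigma, Nat.card_coe_set_eq] using hcard)).1
  refine ⟨fun i j hij => Set.disjoint_left.2 fun e hi hj => hij ?_, fun e => ⟨hcover e, ?_⟩⟩
  · exact congrArg Sigma.fst (@hinj ⟨i, e, hi⟩ ⟨j, e, hj⟩ rfl)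
  · rintro ⟨i, hi⟩
    exact edgeSet_mono (hle i) hi

lemma ncard_edgeSet_top {V : Type*} [Finite V] :
    (⊤ : SimpleGraph V).edgeSet.ncard = (Nat.card V).choose 2 := by
  classical
  have := Fintype.ofFinite V
  rw [← coe_edgeFinset, Set.ncard_coe_finset, card_edgeFinset_top_eq_card_choose_two,
    Nat.card_eq_fintype_card]

theorem isARCS_of_cover {V S ι κ : Type*} [Finite V] [Finite S] [Finite ι] [Finite κ] {k m : ℕ}
    (hk : 3 ≤ k) (hV : Nat.card V = 2 * k * m + 1) (hS : Nat.card S = k * m)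
    (hι : Nat.card ι = 2 * m) (hκ : Nat.card κ = m)
    {f : S → ι × ZMod k → V} (hf : ∀ s, Function.Injective (f s))
    {g : κ × ZMod k → V} (hg : Function.Injective g)
    (hcover : (⨆ s, cycleUnion (f s)) ⊔ cycleUnion g = ⊤) :
    IsARCS k (2 * k * m + 1) := by
  have : NeZero k := ⟨by omega⟩
  have hclasses : (2 * k * m + 1 - 1) / 2 = Nat.card S := by
    rw [hS, Nat.add_sub_cancel, mul_assoc, Nat.mul_div_cancel_left _ two_pos]
  have halmost : (2 * k * m + 1 - 1) / k = Nat.card ι := by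
    rw [hι, Nat.add_sub_cancel, mul_comm 2, mul_assoc, Nat.mul_div_cancel_left _ (by omega)]
  have hhalf : (2 * k * m + 1 - 1) / (2 * k) = Nat.card κ := by
    rw [hκ, Nat.add_sub_cancel, Nat.mul_div_cancel_left _ (by omega)]
  let e : V ≃ Fin (2 * k * m + 1) := Finite.equivFinOfCardEq hV
  let σ : S ≃ Fin ((2 * k * m + 1 - 1) / 2) := Finite.equivFinOfCardEq hclasses.symm
  let F : Fin ((2 * k * m + 1 - 1) / 2) ⊕ Unit → SimpleGraph (Fin (2 * k * m + 1)) :=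
    Sum.elim (fun i => cycleUnion (e ∘ f (σ.symm i))) fun _ => cycleUnion (e ∘ g)
  refine ⟨F, fun i => ?_, fun _ => ?_, isDecomp_of_sum_ncard_edgeSet_le (fun _ => le_top) ?_ ?_⟩
  · exact halmost ▸ isCycleClass_cycleUnion hk (e.injective.comp (hf _))
  · exact hhalf ▸ isCycleClass_cycleUnion hk (e.injective.comp hg)
  · refine Sym2.ind fun a b hab => ?_
    have hadj : ((⨆ s, cycleUnion (f s)) ⊔ cycleUnion g).Adj (e.symm a) (e.symm b) :=
      hcover ▸ e.symm.injective.ne hab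
    rw [sup_adj, iSup_adj] at hadj
    rcases hadj with ⟨s, h⟩ | h
    · exact ⟨Sum.inl (σ s), by simpa [F] using cycleUnion_comp_adj e.injective h⟩
    · exact ⟨Sum.inr (), by simpa [F] using cycleUnion_comp_adj e.injective h⟩
  · calc ∑ i, (F i).edgeSet.ncard
        ≤ ∑ _ : Fin ((2 * k * m + 1 - 1) / 2), Nat.card ι * k + ∑ _ : Unit, Nat.card κ * k := by
          rw [Fintype.sum_sum_type]
          gcongr <;> exact ncard_edgeSet_cycleUnion_le _
      _ = (2 * k * m + 1) * (2 * k * m) / 2 := by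
          simp only [Finset.sum_const, Finset.card_univ, Fintype.card_fin, hclasses, hS, hι, hκ]
          refine (Nat.div_eq_of_eq_mul_left two_pos ?_).symm
          simp only [Fintype.card_unit, smul_eq_mul]
          ring
      _ = (⊤ : SimpleGraph (Fin (2 * k * m + 1))).edgeSet.ncard := by
          rw [ncard_edgeSet_top, Nat.card_fin, Nat.choose_two_right, Nat.add_sub_cancel]

/-- `p 0, …, p (n - 1)` is a graceful labelling of the path with `n` vertices: the labels are
`0, …, n - 1` and the absolute differences of consecutive labels are `1, …, n - 1`. The values
`p i` with `n ≤ i` are irrelevant; injectivity on `i < n` follows from `lt` and `surj`. -/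
structure IsGracefulPath (n : ℕ) (p : ℕ → ℕ) : Prop where
  lt : ∀ i < n, p i < n
  surj : ∀ v < n, ∃ i < n, p i = v
  diff : ∀ d < n, 0 < d → ∃ i < n - 1, p (i + 1) = p i + d ∨ p i = p (i + 1) + d

lemma isGracefulPath_zigzag (n : ℕ) :
    IsGracefulPath n fun i => if i % 2 = 0 then i / 2 else n - 1 - i / 2 where
  lt i hi := by split_ifs <;> omega
  surj v hv := by
    by_cases h : 2 * v < n
    · exact ⟨2 * v, h, by simp⟩
    · exact ⟨2 * (n - 1 - v) + 1, by omega, by split_ifs <;> omega⟩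
  diff d hd hd0 := ⟨n - 1 - d, by omega, by split_ifs <;> omega⟩

lemma IsGracefulPath.add_three {n : ℕ} {p : ℕ → ℕ} (hp : IsGracefulPath n p) (h0 : p 0 = 1) :
    IsGracefulPath (n + 3) fun
      | 0 => 1
      | 1 => n + 2
      | 2 => 0
      | i + 3 => n + 1 - p i where
  lt i hi := by
    match i with
    | 0 | 1 | 2 | i + 3 => grind
  surj v hv := by
    by_cases hv0 : v = 0
    · exact ⟨2, by omega, hv0.symm⟩
    by_cases hv1 : v = 1
    · exact ⟨0, by omega, hv1.symm⟩
    by_cases hv2 : v = n + 2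
    · exact ⟨1, by omega, hv2.symm⟩
    obtain ⟨i, hi, hpi⟩ := hp.surj (n + 1 - v) (by omega)
    exact ⟨i + 3, by omega, by grind⟩
  diff d hd hd0 := by
    by_cases hd1 : d = n + 1
    · exact ⟨0, by omega, by grind⟩
    by_cases hd2 : d = n + 2
    · exact ⟨1, by omega, by grind⟩
    by_cases hdn : d = n
    · exact ⟨2, by omega, by grind⟩
    obtain ⟨i, hi, hpi⟩ := hp.diff d (by omega) hd0
    have := hp.lt i (by omega)
    have := hp.lt (i + 1) (by omega)
    exact ⟨i + 3, by omega, by grind⟩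

lemma exists_isGracefulPath_one : ∀ n, 2 ≤ n → ∃ p, IsGracefulPath n p ∧ p 0 = 1
  | 2, _ => ⟨fun i => [1, 0].getD i 0, ⟨by decide, by decide, by decide⟩, rfl⟩
  | 3, _ => ⟨fun i => [1, 2, 0].getD i 0, ⟨by decide, by decide, by decide⟩, rfl⟩
  | 4, _ => ⟨fun i => [1, 2, 0, 3].getD i 0, ⟨by decide, by decide, by decide⟩, rfl⟩
  | n + 5, _ =>
    have ⟨_, hp, hp0⟩ := exists_isGracefulPath_one (n + 2) (by omega)
    ⟨_, hp.add_three hp0, rfl⟩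

lemma exists_isGracefulPath_even_add {n : ℕ} (hn : 2 ≤ n) :
    ∃ p, IsGracefulPath n p ∧ Even (n + p 0) := by
  rcases Nat.even_or_odd n with heven | hodd
  · exact ⟨_, isGracefulPath_zigzag n, by simpa using heven⟩
  · obtain ⟨p, hp, hp0⟩ := exists_isGracefulPath_one n hn
    exact ⟨p, hp, hp0 ▸ hodd.add_one⟩

section Differences

variable {G R ι : Type*} [AddCommGroup G] {k : ℕ} {f : ι × ZMod k → Option (G × R)}

/-- Translation by `s` of the rows `G × {r}`, extended by the fixed point `none`, which plays the
role of `∞`. -/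
def shift (s : G) : Option (G × R) → Option (G × R) :=
  Option.map (Prod.map (· + s) id)

lemma shift_injective (s : G) : Function.Injective (shift s : Option (G × R) → _) :=
  Option.map_injective ((add_left_injective s).prodMap Function.injective_id)

/-- The union of all translates of the cycles `f`. -/
def development (f : ι × ZMod k → Option (G × R)) : SimpleGraph (Option (G × R)) :=
  ⨆ s, cycleUnion (shift s ∘ f)

lemma development_adj_shift {a b : Option (G × R)} (h : (cycleUnion f).Adj a b) (s : G) :
    (development f).Adj (shift s a) (shift s b) :=
  iSup_adj.2 ⟨s, cycleUnion_comp_adj (shift_injective s) h⟩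

lemma development_adj_some {u c : G} {r r' : R}
    (h : (cycleUnion f).Adj (some (u, r)) (some (u + c, r'))) (x : G) :
    (development f).Adj (some (x, r)) (some (x + c, r')) := by
  simpa [shift, add_right_comm u c] using development_adj_shift h (x - u)

lemma development_adj_none {u : G} {r : R} (h : (cycleUnion f).Adj none (some (u, r))) (x : G) :
    (development f).Adj none (some (x, r)) := by
  simpa [shift] using development_adj_shift h (x - u)

end Differences

lemma eq_top_of_adj {G : Type*} {H : SimpleGraph (Option (G × Bool))}
    (hinfty : ∀ x r, H.Adj none (some (x, r)))
    (hmixed : ∀ x y, H.Adj (some (x, true)) (some (y, false)))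
    (hpure : ∀ r x y, x ≠ y → H.Adj (some (x, r)) (some (y, r))) : H = ⊤ := by
  refine eq_top_iff.2 fun a b hab => ?_
  match a, b with
  | none, none => exact absurd rfl hab
  | none, some (y, r) => exact hinfty y r
  | some (x, r), none => exact (hinfty x r).symm
  | some (x, true), some (y, false) => exact hmixed x y
  | some (x, false), some (y, true) => exact (hmixed y x).symm
  | some (x, true), some (y, true) | some (x, false), some (y, false) =>
    exact hpure _ x y fun h => hab (by rw [h])

lemma two_mul_natCast_add_one_eq_zero (n : ℕ) : 2 * (n : ZMod (2 * n + 1)) + 1 = 0 := by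
  exact_mod_cast ZMod.natCast_self (2 * n + 1)

lemma natAbs_valMinAbs_le_of_odd_modulus {n : ℕ} (x : ZMod (2 * n + 1)) :
    x.valMinAbs.natAbs ≤ n := by
  have := x.natAbs_valMinAbs_le
  omega

lemma adj_of_forall_adj_add_natCast {V : Type*} {H : SimpleGraph V} {n : ℕ}
    {c : ZMod (2 * n + 1) → V} (h : ∀ x, ∀ d : ℕ, 0 < d → d ≤ n → H.Adj (c x) (c (x + d)))
    {x y : ZMod (2 * n + 1)} (hxy : x ≠ y) : H.Adj (c x) (c y) := by
  set d := (y - x).valMinAbs.natAbs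
  have hd : 0 < d := by simpa [d, Int.natAbs_pos, sub_eq_zero] using hxy.symm
  have hdn : d ≤ n := natAbs_valMinAbs_le_of_odd_modulus _
  have hcast : (d : ZMod (2 * n + 1)) = y - x ∨ (d : ZMod (2 * n + 1)) = x - y := by
    rw [ZMod.natCast_natAbs_valMinAbs]
    split_ifs <;> simp
  rcases hcast with hd' | hd'
  · simpa [hd'] using h x d hd hdn
  · simpa [hd'] using (h y d hd hdn).symm

/-- The cycle on the row `false` in which consecutive points have difference `n`. -/
def rowCycle (n : ℕ) (x : Unit × ZMod (2 * n + 1)) : Option (ZMod (2 * n + 1) × Bool) :=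
  some (x.2 * n, false)

lemma rowCycle_injective (n : ℕ) : Function.Injective (rowCycle n) := by
  rintro ⟨⟨⟩, x⟩ ⟨⟨⟩, y⟩ h
  simp only [rowCycle, Option.some.injEq, Prod.mk.injEq, and_true] at h
  rw [Prod.mk.injEq]
  exact ⟨rfl, by linear_combination (-2) * h + (x - y) * two_mul_natCast_add_one_eq_zero n⟩

lemma cycleUnion_rowCycle_adj {n : ℕ} (hn : 0 < n) (x : ZMod (2 * n + 1)) :
    (cycleUnion (rowCycle n)).Adj (some (x, false)) (some (x + n, false)) := by
  have : Fact (1 < 2 * n + 1) := ⟨by omega⟩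
  have hx : -2 * x * n = x := by
    linear_combination (-x) * two_mul_natCast_add_one_eq_zero n
  simpa only [rowCycle, add_mul, one_mul, hx] using
    cycleUnion_adj_succ (rowCycle_injective n) () (-2 * x)

theorem isARCS_of_differences {n : ℕ} (hn : 0 < n)
    {f : Bool × ZMod (2 * n + 1) → Option (ZMod (2 * n + 1) × Bool)} (hf : Function.Injective f)
    (hinfty : ∀ r, ∃ u, (cycleUnion f).Adj none (some (u, r)))
    (hmixed : ∀ c, ∃ u, (cycleUnion f).Adj (some (u, true)) (some (u + c, false)))
    (hpure : ∀ r, ∀ d : ℕ, 0 < d → d < n →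
      ∃ u, (cycleUnion f).Adj (some (u, r)) (some (u + d, r)))
    (hpure_top : ∃ u, (cycleUnion f).Adj (some (u, true)) (some (u + n, true))) :
    IsARCS (2 * n + 1) (2 * (2 * n + 1) + 1) := by
  let H := development f ⊔ cycleUnion (rowCycle n)
  have hH_infty (x : ZMod (2 * n + 1)) (r : Bool) : H.Adj none (some (x, r)) :=
    Or.inl (development_adj_none (hinfty r).choose_spec x)
  have hH_mixed (x y : ZMod (2 * n + 1)) : H.Adj (some (x, true)) (some (y, false)) := by
    obtain ⟨u, hu⟩ := hmixed (y - x)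
    exact Or.inl (by simpa using development_adj_some hu x)
  have hH_pure (r : Bool) (x y : ZMod (2 * n + 1)) (hxy : x ≠ y) :
      H.Adj (some (x, r)) (some (y, r)) := by
    refine adj_of_forall_adj_add_natCast (c := fun x => some (x, r)) (fun x d hd hdn => ?_) hxy
    rcases hdn.lt_or_eq with hlt | rfl
    · exact Or.inl (development_adj_some (hpure r d hd hlt).choose_spec x)
    · cases r
      · exact Or.inr (cycleUnion_rowCycle_adj hn x)
      · exact Or.inl (development_adj_some hpure_top.choose_spec x)
  rw [← mul_one (2 * (2 * n + 1))]
  refine isARCS_of_cover (by omega) ?_ ?_ ?_ ?_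
    (fun s => (shift_injective s).comp hf) (rowCycle_injective n)
    (eq_top_of_adj hH_infty hH_mixed hH_pure)
  · simp [mul_comm]
  · simp
  · simp
  · simp

section BaseClass

variable {n j : ℕ} {p q : ℕ → ℕ}

/-- The point `i` of the row `r`. -/
abbrev point (n : ℕ) (r : Bool) (i : ℕ) : Option (ZMod (2 * n + 1) × Bool) :=
  some (i, r)

/-- The base cycle `∞, p (n - 1), …, p 0, q 0, …, q (n - 1)`, where the labels `p i` are placed in
the row `false`, the labels `q i` in the row `true`, and all labels are raised by `n + 1`. -/
def inftyCycle (n : ℕ) (p q : ℕ → ℕ) : ℕ → Option (ZMod (2 * n + 1) × Bool)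
  | 0 => none
  | i + 1 =>
    if i < n then point n false (n + 1 + p (n - 1 - i))
    else point n true (n + 1 + q (i - n))

/-- The base cycle `y 0, x n, y 1, x (n - 1), …, y n` with `x j` left out, where `x i` is the point
`i` of the row `false` and `y i` the point `i` of the row `true`. -/
def zigzagCycle (n j i : ℕ) : Option (ZMod (2 * n + 1) × Bool) :=
  if i % 2 = 0 then point n true (i / 2)
  else if j < n - i / 2 then point n false (n - i / 2)
  else point n false (n - i / 2 - 1)

/-- The two base cycles. -/
def baseCycle (n j : ℕ) (p q : ℕ → ℕ) : Bool → ℕ → Option (ZMod (2 * n + 1) × Bool)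
  | false => inftyCycle n p q
  | true => zigzagCycle n j

/-- The base almost parallel class, which misses only the point `j` of the row `false`. -/
def baseClass (n j : ℕ) (p q : ℕ → ℕ) (x : Bool × ZMod (2 * n + 1)) :
    Option (ZMod (2 * n + 1) × Bool) :=
  baseCycle n j p q x.1 x.2.val

lemma inftyCycle_sub {i : ℕ} (hi : i < n) :
    inftyCycle n p q (n - i) = point n false (n + 1 + p i) := by
  obtain ⟨m, hm⟩ : ∃ m, n - i = m + 1 := ⟨n - i - 1, by omega⟩
  rw [hm, inftyCycle, if_pos (by omega), show n - 1 - m = i by omega]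

lemma inftyCycle_add (i : ℕ) :
    inftyCycle n p q (n + i + 1) = point n true (n + 1 + q i) := by
  rw [inftyCycle, if_neg (by omega), Nat.add_sub_cancel_left]

lemma zigzagCycle_two_mul (i : ℕ) : zigzagCycle n j (2 * i) = point n true i := by
  simp [zigzagCycle]

lemma zigzagCycle_two_mul_add_one_of_lt {i : ℕ} (hi : j < n - i) :
    zigzagCycle n j (2 * i + 1) = point n false (n - i) := by
  simp [zigzagCycle, Nat.mul_add_div, hi]

lemma zigzagCycle_two_mul_add_one_of_le {i : ℕ} (hi : n - i ≤ j) :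
    zigzagCycle n j (2 * i + 1) = point n false (n - i - 1) := by
  simp [zigzagCycle, Nat.mul_add_div, hi.not_gt]

lemma baseClass_natCast {i : ℕ} (hi : i < 2 * n + 1) (t : Bool) :
    baseClass n j p q (t, i) = baseCycle n j p q t i := by
  rw [baseClass, ZMod.val_cast_of_lt hi]

lemma mem_range_baseClass_false (hp : IsGracefulPath n p) (hj : j ≤ n) {v : ℕ}
    (hv : v < 2 * n + 1) (hvj : v ≠ j) : point n false v ∈ Set.range (baseClass n j p q) := by
  rcases lt_or_ge n v with hnv | hvn
  · obtain ⟨i, hi, hpi⟩ := hp.surj (v - (n + 1)) (by omega)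
    refine ⟨(false, (n - i : ℕ)), ?_⟩
    rw [baseClass_natCast (by omega), baseCycle, inftyCycle_sub hi, hpi,
      Nat.add_sub_cancel' (by omega)]
  rcases hvj.lt_or_gt with hlt | hgt
  · refine ⟨(true, (2 * (n - 1 - v) + 1 : ℕ)), ?_⟩
    rw [baseClass_natCast (by omega), baseCycle, zigzagCycle_two_mul_add_one_of_le (by omega),
      show n - (n - 1 - v) - 1 = v by omega]
  · refine ⟨(true, (2 * (n - v) + 1 : ℕ)), ?_⟩
    rw [baseClass_natCast (by omega), baseCycle, zigzagCycle_two_mul_add_one_of_lt (by omega),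
      Nat.sub_sub_self hvn]

lemma mem_range_baseClass_true (hq : IsGracefulPath n q) {v : ℕ} (hv : v < 2 * n + 1) :
    point n true v ∈ Set.range (baseClass n j p q) := by
  rcases lt_or_ge n v with hnv | hvn
  · obtain ⟨i, hi, hqi⟩ := hq.surj (v - (n + 1)) (by omega)
    refine ⟨(false, (n + i + 1 : ℕ)), ?_⟩
    rw [baseClass_natCast (by omega), baseCycle, inftyCycle_add, hqi,
      Nat.add_sub_cancel' (by omega)]
  · refine ⟨(true, (2 * v : ℕ)), ?_⟩
    rw [baseClass_natCast (by omega), baseCycle, zigzagCycle_two_mul]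

lemma baseClass_injective (hp : IsGracefulPath n p) (hq : IsGracefulPath n q) (hj : j ≤ n) :
    Function.Injective (baseClass n j p q) := by
  let withMissing : Option (Bool × ZMod (2 * n + 1)) → Option (ZMod (2 * n + 1) × Bool) :=
    fun x => x.elim (point n false j) (baseClass n j p q)
  have hsurj : Function.Surjective withMissing := by
    have hrange {x} (hx : x ∈ Set.range (baseClass n j p q)) : ∃ y, withMissing y = x :=
      hx.imp' some fun _ h => h
    rintro (_ | ⟨x, _ | _⟩)
    · exact ⟨some (false, 0), by simp [withMissing, baseClass, baseCycle, inftyCycle]⟩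
    · by_cases hx : x.val = j
      · exact ⟨none, by simp [withMissing, ← hx]⟩
      · simpa [point] using hrange (mem_range_baseClass_false hp hj x.val_lt hx)
    · simpa [point] using hrange (mem_range_baseClass_true hq x.val_lt)
  have hbij := hsurj.bijective_of_nat_card_le (by simp [mul_comm])
  exact hbij.1.comp (Option.some_injective _)

lemma cycleUnion_baseClass_adj_succ (hf : Function.Injective (baseClass n j p q)) (t : Bool) {i : ℕ}
    (hi : i < 2 * n) : (cycleUnion (baseClass n j p q)).Adj
      (baseCycle n j p q t i)
      (baseCycle n j p q t (i + 1)) := by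
  have : Fact (1 < 2 * n + 1) := ⟨by omega⟩
  rw [← baseClass_natCast (by omega) t, ← baseClass_natCast (by omega) t, Nat.cast_succ]
  exact cycleUnion_adj_succ hf t i

lemma cycleUnion_baseClass_adj_close (hn : 0 < n) (hf : Function.Injective (baseClass n j p q))
    (t : Bool) : (cycleUnion (baseClass n j p q)).Adj
      (baseCycle n j p q t (2 * n))
      (baseCycle n j p q t 0) := by
  have : Fact (1 < 2 * n + 1) := ⟨by omega⟩
  have hclose : ((2 * n : ℕ) : ZMod (2 * n + 1)) + 1 = (0 : ℕ) := by
    simpa using two_mul_natCast_add_one_eq_zero n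
  rw [← baseClass_natCast (by omega) t, ← baseClass_natCast (by omega) t, ← hclose]
  exact cycleUnion_adj_succ hf t _

lemma exists_baseClass_adj_infty (hn : 0 < n) (hf : Function.Injective (baseClass n j p q))
    (r : Bool) : ∃ u, (cycleUnion (baseClass n j p q)).Adj none (some (u, r)) := by
  cases r
  · have h : (cycleUnion (baseClass n j p q)).Adj none (inftyCycle n p q 1) :=
      cycleUnion_baseClass_adj_succ hf false (i := 0) (by omega)
    have hfirst : inftyCycle n p q 1 = point n false (n + 1 + p (n - 1)) := by
      simp [inftyCycle, hn]
    exact ⟨_, hfirst ▸ h⟩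
  · have h : (cycleUnion (baseClass n j p q)).Adj (inftyCycle n p q (2 * n)) none :=
      cycleUnion_baseClass_adj_close hn hf false
    have hlast : inftyCycle n p q (n + (n - 1) + 1) = point n true (n + 1 + q (n - 1)) :=
      inftyCycle_add (n - 1)
    rw [show n + (n - 1) + 1 = 2 * n by omega] at hlast
    exact ⟨_, (hlast ▸ h).symm⟩

lemma exists_adj_add_of_point_adj {H : SimpleGraph (Option (ZMod (2 * n + 1) × Bool))} {r : Bool}
    {a b d : ℕ} (h : H.Adj (point n r a) (point n r b)) (hd : b = a + d ∨ a = b + d) :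
    ∃ u, H.Adj (some (u, r)) (some (u + d, r)) := by
  rcases hd with rfl | rfl
  · exact ⟨a, by simpa [point] using h⟩
  · exact ⟨b, by simpa [point] using h.symm⟩

lemma exists_baseClass_adj_pure (hp : IsGracefulPath n p) (hq : IsGracefulPath n q)
    (hf : Function.Injective (baseClass n j p q)) (r : Bool) {d : ℕ} (hd : 0 < d) (hdn : d < n) :
    ∃ u, (cycleUnion (baseClass n j p q)).Adj (some (u, r)) (some (u + d, r)) := by
  cases r
  · obtain ⟨i, hi, hdiff⟩ := hp.diff d hdn hd
    have h : (cycleUnion (baseClass n j p q)).Adj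
        (inftyCycle n p q (n - (i + 1))) (inftyCycle n p q (n - (i + 1) + 1)) :=
      cycleUnion_baseClass_adj_succ hf false (by omega)
    rw [show n - (i + 1) + 1 = n - i by omega, inftyCycle_sub (by omega),
      inftyCycle_sub (by omega)] at h
    exact exists_adj_add_of_point_adj h (by omega)
  · obtain ⟨i, hi, hdiff⟩ := hq.diff d hdn hd
    have h : (cycleUnion (baseClass n j p q)).Adj
        (inftyCycle n p q (n + i + 1)) (inftyCycle n p q (n + (i + 1) + 1)) :=
      cycleUnion_baseClass_adj_succ hf false (i := n + i + 1) (by omega)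
    rw [inftyCycle_add, inftyCycle_add] at h
    exact exists_adj_add_of_point_adj h (by omega)

lemma exists_baseClass_adj_pure_top (hn : 0 < n) (hf : Function.Injective (baseClass n j p q)) :
    ∃ u, (cycleUnion (baseClass n j p q)).Adj (some (u, true)) (some (u + n, true)) := by
  have h : (cycleUnion (baseClass n j p q)).Adj
      (zigzagCycle n j (2 * n)) (zigzagCycle n j (2 * 0)) :=
    cycleUnion_baseClass_adj_close hn hf true
  rw [zigzagCycle_two_mul, zigzagCycle_two_mul] at h
  exact exists_adj_add_of_point_adj h (by omega)

lemma exists_baseClass_adj_mixed_of_zigzag (hf : Function.Injective (baseClass n j p q)) {m : ℕ}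
    (hm : m < 2 * n) :
    ∃ x y : ℕ, (cycleUnion (baseClass n j p q)).Adj (point n true y) (point n false x) ∧
      (x : ℤ) - y = if m < 2 * (n - j) then (n - m : ℤ) else n - m - 1 := by
  have h : (cycleUnion (baseClass n j p q)).Adj (zigzagCycle n j m) (zigzagCycle n j (m + 1)) :=
    cycleUnion_baseClass_adj_succ hf true hm
  obtain ⟨i, rfl | rfl⟩ := Nat.even_or_odd' m
  · rw [zigzagCycle_two_mul] at h
    rcases lt_or_ge j (n - i) with hi | hi
    · rw [zigzagCycle_two_mul_add_one_of_lt hi] at h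
      exact ⟨_, _, h, by split_ifs <;> omega⟩
    · rw [zigzagCycle_two_mul_add_one_of_le hi] at h
      exact ⟨_, _, h, by split_ifs <;> omega⟩
  · rw [show 2 * i + 1 + 1 = 2 * (i + 1) by ring, zigzagCycle_two_mul] at h
    rcases lt_or_ge j (n - i) with hi | hi
    · rw [zigzagCycle_two_mul_add_one_of_lt hi] at h
      exact ⟨_, _, h.symm, by split_ifs <;> omega⟩
    · rw [zigzagCycle_two_mul_add_one_of_le hi] at h
      exact ⟨_, _, h.symm, by split_ifs <;> omega⟩

lemma exists_baseClass_adj_mixed_of_infty (hn : 0 < n)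
    (hf : Function.Injective (baseClass n j p q)) :
    ∃ x y : ℕ, (cycleUnion (baseClass n j p q)).Adj (point n true y) (point n false x) ∧
      (x : ℤ) - y = p 0 - q 0 := by
  have h : (cycleUnion (baseClass n j p q)).Adj
      (inftyCycle n p q (n - 0)) (inftyCycle n p q (n + 0 + 1)) :=
    cycleUnion_baseClass_adj_succ hf false (by omega)
  rw [inftyCycle_sub hn, inftyCycle_add 0] at h
  exact ⟨_, _, h.symm, by omega⟩

lemma exists_baseClass_adj_mixed (hn : 0 < n) (hj : j ≤ n)
    (hf : Function.Injective (baseClass n j p q)) (hjpq : n + p 0 = 2 * j + q 0)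
    (c : ZMod (2 * n + 1)) :
    ∃ u, (cycleUnion (baseClass n j p q)).Adj (some (u, true)) (some (u + c, false)) := by
  have hc := natAbs_valMinAbs_le_of_odd_modulus c
  obtain ⟨x, y, hadj, hxy⟩ : ∃ x y : ℕ,
      (cycleUnion (baseClass n j p q)).Adj (point n true y) (point n false x) ∧
        (x : ℤ) - y = c.valMinAbs := by
    rcases lt_trichotomy c.valMinAbs (p 0 - q 0) with hlt | heq | hgt
    · obtain ⟨x, y, h, hxy⟩ := exists_baseClass_adj_mixed_of_zigzag hf
        (m := (n - 1 - c.valMinAbs).toNat) (by omega)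
      exact ⟨x, y, h, by split_ifs at hxy <;> omega⟩
    · exact heq ▸ exists_baseClass_adj_mixed_of_infty hn hf
    · obtain ⟨x, y, h, hxy⟩ := exists_baseClass_adj_mixed_of_zigzag hf
        (m := (n - c.valMinAbs).toNat) (by omega)
      exact ⟨x, y, h, by split_ifs at hxy <;> omega⟩
  have hcast : (y : ZMod (2 * n + 1)) + c = x := by
    rw [← c.coe_valMinAbs, ← hxy]
    push_cast
    ring
  exact ⟨y, hcast ▸ hadj⟩

theorem isARCS_of_isGracefulPath (hn : 0 < n) (hp : IsGracefulPath n p) (hq : IsGracefulPath n q)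
    (hjpq : n + p 0 = 2 * j + q 0) : IsARCS (2 * n + 1) (2 * (2 * n + 1) + 1) := by
  have hj : j ≤ n := by
    have := hp.lt 0 hn
    omega
  have hf : Function.Injective (baseClass n j p q) := baseClass_injective hp hq hj
  exact isARCS_of_differences hn hf (exists_baseClass_adj_infty hn hf)
    (exists_baseClass_adj_mixed hn hj hf hjpq)
    (fun r _ => exists_baseClass_adj_pure hp hq hf r) (exists_baseClass_adj_pure_top hn hf)

end BaseClass

theorem stmt4_general (k : ℕ) (hk : Odd k) (h5 : 5 ≤ k) : IsARCS k (2 * k + 1) := by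
  obtain ⟨n, rfl⟩ := hk
  obtain ⟨p, hp, j, hj⟩ := exists_isGracefulPath_even_add (n := n) (by omega)
  exact isARCS_of_isGracefulPath (by omega) hp (isGracefulPath_zigzag n)
    (by simpa [two_mul] using hj)

theorem stmt4 (k : ℕ) (hk : Odd k) (h9 : 9 ≤ k) : IsARCS k (2 * k + 1) :=
  stmt4_general k hk (by omega)
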